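/- (Distributional convergence of the diffusion term under renormalization.) Under the assumptions of the main theorem on σ (σ ∈ (L²([0,T], W^{1,2}_loc(ℝⁿ)))^{n×m}, σ/(1+|x|) ∈ (L²([0,T], L²+L^∞))^{n×m}), let p ∈ X₂, p_ε = ρ_ε ∗ p, with σ*∇p_ε → σ*∇p in L²([0,T], L²_loc) as ε → 0, and let β ∈ C²(ℝ). Then for every test function φ ∈ C_c^∞([0,T)×ℝⁿ), ∫₀^T∫_{ℝⁿ} β'(p_ε) ⟨σ*∇φ, σ*∇p_ε⟩ dx dt → ∫₀^T∫_{ℝⁿ} β'(p) ⟨σ*∇φ, σ*∇p⟩ dx dt as ε → 0; equivalently, ∂_i(σ_{ik}σ_{jk}∂_j β(p_ε)) converges to ∂_i(σ_{ik}σ_{jk}∂_j β(p)) in the distributional sense. -/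

import Mathlib

/-!
The test function restricts everything to `(0,T] × B(0,R)`, where the integrand is
`β'(p_ε) ∑ₖ aₖ g_{ε,k}` with `aₖ = ⟨σₖ, ∇φ⟩ ∈ L²` (as `σ ∈ L²_loc` and `∇φ` is bounded) and
`g_ε = σ^*∇p_ε → G = σ^*∇p` in `L²`. The factor `β'(p_ε)` is uniformly bounded, because
`|p_ε| ≤ ‖p‖_∞`, and tends to `β'(p)` almost everywhere, because `p_ε → p` at every Lebesgue point
of `p(t,·)` (`FP.ae_tendsto_conv_moll`). Writing

  `β'(p_ε) ∑ aₖ g_{ε,k} - β'(p) ∑ aₖ Gₖ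
    = β'(p_ε) ∑ aₖ (g_{ε,k} - Gₖ) + (β'(p_ε) - β'(p)) ∑ aₖ Gₖ`,

the first term tends to `0` in `L¹` by Cauchy-Schwarz and the second by dominated convergence
(`tendsto_integral_bilinear`). Joint measurability in `(t,x)` of the mollified quantities
(`FP.measurable_conv`) turns the iterated integrals into integrals over the product space.
-/

open MeasureTheory Metric Filter Set Function
open scoped ENNReal Topology RealInnerProductSpace

noncomputable section

/-- Euclidean space `ℝⁿ`. -/
abbrev Rn (n : ℕ) := EuclideanSpace ℝ (Fin n)

namespace FP

variable {n m : ℕ}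

/-- Spatial convolution `(f ⋆ g)(x) = ∫ f(y) g(x - y) dy`. -/
def conv (f g : Rn n → ℝ) (x : Rn n) : ℝ := ∫ y, f y * g (x - y)

/-- The rescaled kernel `ρ_ε(x) = ε^{-n} ρ(x/ε)`. -/
def moll (ρ : Rn n → ℝ) (ε : ℝ) (x : Rn n) : ℝ := (ε ^ n)⁻¹ * ρ (ε⁻¹ • x)

/-- The class `𝒦` of convolution kernels: smooth, nonnegative, supported in the
open unit ball and of total mass one. -/
structure IsKernel (ρ : Rn n → ℝ) : Prop where
  smooth : ContDiff ℝ (⊤ : ℕ∞) ρ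
  supp : tsupport ρ ⊆ ball (0 : Rn n) 1
  nonneg : ∀ x, 0 ≤ ρ x
  total : (∫ x, ρ x) = 1

/-- `i`-th spatial partial derivative (of a smooth function). -/
def pd (i : Fin n) (f : Rn n → ℝ) (x : Rn n) : ℝ :=
  fderiv ℝ f x (EuclideanSpace.single i 1)

/-- Time derivative of a time-dependent function. -/
def pt (φ : ℝ → Rn n → ℝ) (t : ℝ) (x : Rn n) : ℝ := deriv (fun s => φ s x) t

/-- Spatial test functions `C_c^∞(ℝⁿ)`. -/
def TestS (ψ : Rn n → ℝ) : Prop := ContDiff ℝ (⊤ : ℕ∞) ψ ∧ HasCompactSupport ψ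

/-- Space-time test functions `C_c^∞([0,T) × ℝⁿ)`. -/
def TestT (T : ℝ) (φ : ℝ → Rn n → ℝ) : Prop :=
  ContDiff ℝ (⊤ : ℕ∞) (uncurry φ) ∧ HasCompactSupport (uncurry φ) ∧
    ∀ t x, T ≤ t → φ t x = 0

/-- Space-time test functions compactly supported in `(0,T) × ℝⁿ`. -/
def TestO (T : ℝ) (φ : ℝ → Rn n → ℝ) : Prop :=
  ContDiff ℝ (⊤ : ℕ∞) (uncurry φ) ∧ HasCompactSupport (uncurry φ) ∧
    ∀ t x, (t ≤ 0 ∨ T ≤ t) → φ t x = 0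

/-- `g` is the `j`-th distributional partial derivative of `f`. -/
def HasWeakPd (j : Fin n) (f g : Rn n → ℝ) : Prop :=
  ∀ ψ : Rn n → ℝ, TestS ψ → ∫ x, f x * pd j ψ x = - ∫ x, g x * ψ x

/-- The distributional divergence `D·c` of `c` is absolutely continuous with density `d`. -/
def HasWeakDiv (c : Rn n → Rn n) (d : Rn n → ℝ) : Prop :=
  ∀ ψ : Rn n → ℝ, TestS ψ → ∫ x, ⟪c x, gradient ψ x⟫ = - ∫ x, d x * ψ x

/-- `b ∈ BV_loc(ℝⁿ;ℝⁿ)`, with derivative matrix measure `Db = M |Db|`, represented by the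
locally finite (total variation) measure `ν = |Db|` together with the polar matrix `M`
(of unit Frobenius norm `ν`-a.e.), i.e. `∂_j b_i = M_{ij} ν` distributionally. -/
structure IsBVRepr (b : Rn n → Rn n) (ν : Measure (Rn n)) (M : Rn n → Fin n → Fin n → ℝ) :
    Prop where
  locfin : ∀ R : ℝ, ν (ball 0 R) < ⊤
  unit : ∀ᵐ x ∂ν, (∑ i, ∑ j, (M x i j) ^ 2) = 1
  repr : ∀ (i j : Fin n) (ψ : Rn n → ℝ), TestS ψ →
    ∫ x, b x i * pd j ψ x = - ∫ x, ψ x * M x i j ∂ν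

/-- `f ∈ L^q([0,T], L^r_loc(ℝⁿ))`. -/
def MemLLoc (T q r : ℝ) (f : ℝ → Rn n → ℝ) : Prop :=
  Measurable (uncurry f) ∧
  ∀ R : ℝ, 0 < R →
    (∫⁻ t in Ioc (0:ℝ) T,
      (∫⁻ x in ball (0 : Rn n) R, ENNReal.ofReal (|f t x| ^ r)) ^ (q / r)) < ⊤

/-- Convergence to `0` in `L^q([0,T], L^r_loc(ℝⁿ))` as `ε → 0⁺`. -/
def TendstoLLoc (T q r : ℝ) (u : ℝ → ℝ → Rn n → ℝ) : Prop :=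
  ∀ R : ℝ, 0 < R →
    Tendsto (fun ε => ∫⁻ t in Ioc (0:ℝ) T,
        (∫⁻ x in ball (0 : Rn n) R, ENNReal.ofReal (|u ε t x| ^ r)) ^ (q / r))
      (𝓝[>] (0:ℝ)) (𝓝 0)

/-- `c ∈ L^q([0,T], W^{1,r}_loc(ℝⁿ;ℝⁿ))`, with weak Jacobian `Dc` (`Dc t x i j = ∂_j c_i(t,x)`). -/
def MemW1Loc (T q r : ℝ) (c : ℝ → Rn n → Rn n) (Dc : ℝ → Rn n → Fin n → Fin n → ℝ) : Prop :=
  Measurable (uncurry c) ∧ Measurable (uncurry Dc) ∧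
  (∀ᵐ t ∂volume.restrict (Ioc (0:ℝ) T), ∀ i j,
      HasWeakPd j (fun x => c t x i) (fun x => Dc t x i j)) ∧
  ∀ R : ℝ, 0 < R →
    (∫⁻ t in Ioc (0:ℝ) T, (∫⁻ x in ball (0 : Rn n) R,
        ENNReal.ofReal (‖c t x‖ ^ r + ∑ i, ∑ j, |Dc t x i j| ^ r)) ^ (q / r)) < ⊤

/-- The multiplication-form commutator `[ρ_ε, g](f) = ρ_ε ∗ (g f) − g (ρ_ε ∗ f)`. -/
def commMul (ρε : Rn n → ℝ) (g f : Rn n → ℝ) (x : Rn n) : ℝ :=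
  conv (fun y => g y * f y) ρε x - g x * conv f ρε x

/-- The mollification `ρ_ε ∗ (c_i ∂_i f)` of the distribution `c·∇f = div(fc) - f div(c)`,
where `d = div(c)`:  `ρ_ε ∗ (c_i ∂_i f) = Σ_i (f c_i) ∗ ∂_i ρ_ε − (f d) ∗ ρ_ε`. -/
def convDer (ρε : Rn n → ℝ) (c : Rn n → Rn n) (d f : Rn n → ℝ) (x : Rn n) : ℝ :=
  (∑ i, conv (fun y => f y * c y i) (pd i ρε) x) - conv (fun y => f y * d y) ρε x

/-- The derivative-form commutator `[ρ_ε, c_i ∂_i](f) = ρ_ε ∗ (c_i ∂_i f) − c_i ∂_i(ρ_ε ∗ f)`,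
where `d = div(c)`. -/
def commDer (ρε : Rn n → ℝ) (c : Rn n → Rn n) (d f : Rn n → ℝ) (x : Rn n) : ℝ :=
  convDer ρε c d f x - ∑ i, c x i * conv f (pd i ρε) x

/-- The commutator `[ρ_ε, b_i ∂_i](f)` for a BV vector field `b` whose derivative matrix
measure is `Db = M ν`, so that `D·b = (Σ_i M_{ii}) ν`. -/
def commDerBV (ρε : Rn n → ℝ) (b : Rn n → Rn n) (ν : Measure (Rn n))
    (M : Rn n → Fin n → Fin n → ℝ) (f : Rn n → ℝ) (x : Rn n) : ℝ :=
  (∑ i, conv (fun y => f y * b y i) (pd i ρε) x)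
    - (∫ y, f y * ρε (x - y) * ∑ i, M y i i ∂ν)
    - ∑ i, b x i * conv f (pd i ρε) x

/-- `b/(1+|x|) ∈ (L¹([0,T], L¹ + L^∞(ℝⁿ)))ⁿ`. -/
def BGrowth (T : ℝ) (b : ℝ → Rn n → Rn n) : Prop :=
  ∃ b₁ b₂ : ℝ → Rn n → Rn n,
    Measurable (uncurry b₁) ∧ Measurable (uncurry b₂) ∧
    (∀ t x, b t x = b₁ t x + b₂ t x) ∧
    (∫⁻ t in Ioc (0:ℝ) T, ∫⁻ x, ENNReal.ofReal (‖b₁ t x‖ / (1 + ‖x‖))) < ⊤ ∧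
    (∫⁻ t in Ioc (0:ℝ) T, eLpNorm (fun x : Rn n => ‖b₂ t x‖ / (1 + ‖x‖)) ⊤ volume) < ⊤

/-- `σ/(1+|x|) ∈ (L²([0,T], L² + L^∞(ℝⁿ)))^{n×m}`
(`σ t x k ∈ ℝⁿ` is the `k`-th column `(σ_{ik}(t,x))_i` of `σ`). -/
def SGrowth (T : ℝ) (σ : ℝ → Rn n → Fin m → Rn n) : Prop :=
  ∃ σ₁ σ₂ : ℝ → Rn n → Fin m → Rn n,
    Measurable (uncurry σ₁) ∧ Measurable (uncurry σ₂) ∧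
    (∀ t x k, σ t x k = σ₁ t x k + σ₂ t x k) ∧
    (∫⁻ t in Ioc (0:ℝ) T, ∫⁻ x, ENNReal.ofReal ((∑ k, ‖σ₁ t x k‖ ^ 2) / (1 + ‖x‖) ^ 2)) < ⊤ ∧
    (∫⁻ t in Ioc (0:ℝ) T,
      (eLpNorm (fun x : Rn n => Real.sqrt (∑ k, ‖σ₂ t x k‖ ^ 2) / (1 + ‖x‖)) ⊤ volume) ^ 2) < ⊤

/-- `b ∈ (L¹([0,T], BV_loc(ℝⁿ)))ⁿ`, via the representation `Db_t = M_t ν_t`. -/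
def BVt (T : ℝ) (b : ℝ → Rn n → Rn n) (ν : ℝ → Measure (Rn n))
    (M : ℝ → Rn n → Fin n → Fin n → ℝ) : Prop :=
  Measurable (uncurry b) ∧
  (∀ᵐ t ∂volume.restrict (Ioc (0:ℝ) T), IsBVRepr (b t) (ν t) (M t)) ∧
  ∀ R : ℝ, 0 < R →
    (∫⁻ t in Ioc (0:ℝ) T,
      ((∫⁻ x in ball (0 : Rn n) R, (‖b t x‖₊ : ℝ≥0∞)) + ν t (ball 0 R))) < ⊤

/-- The divergence measure `D·b_t` is absolutely continuous with density
`div(b) ∈ L¹([0,T], L¹_loc(ℝⁿ))`. -/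
def DivB (T : ℝ) (b : ℝ → Rn n → Rn n) (divb : ℝ → Rn n → ℝ) : Prop :=
  Measurable (uncurry divb) ∧
  (∀ᵐ t ∂volume.restrict (Ioc (0:ℝ) T), HasWeakDiv (b t) (divb t)) ∧
  ∀ R : ℝ, 0 < R →
    (∫⁻ t in Ioc (0:ℝ) T, ∫⁻ x in ball (0 : Rn n) R, (‖divb t x‖₊ : ℝ≥0∞)) < ⊤

/-- `[div(b)]⁻ ∈ L¹([0,T], L^∞(ℝⁿ))`. -/
def DivBNeg (T : ℝ) (divb : ℝ → Rn n → ℝ) : Prop :=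
  (∫⁻ t in Ioc (0:ℝ) T, eLpNorm (fun x : Rn n => max (-(divb t x)) 0) ⊤ volume) < ⊤

/-- `σ ∈ (L²([0,T], W^{1,2}_loc(ℝⁿ)))^{n×m}`, with weak partial derivatives
`Dσ t x k i j = ∂_j σ_{ik}(t,x)`. -/
def SigmaW (T : ℝ) (σ : ℝ → Rn n → Fin m → Rn n)
    (Dσ : ℝ → Rn n → Fin m → Fin n → Fin n → ℝ) : Prop :=
  Measurable (uncurry σ) ∧ Measurable (uncurry Dσ) ∧
  (∀ᵐ t ∂volume.restrict (Ioc (0:ℝ) T), ∀ k i j,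
      HasWeakPd j (fun x => σ t x k i) (fun x => Dσ t x k i j)) ∧
  ∀ R : ℝ, 0 < R →
    (∫⁻ t in Ioc (0:ℝ) T, ∫⁻ x in ball (0 : Rn n) R,
      ENNReal.ofReal (∑ k, (‖σ t x k‖ ^ 2 + ∑ i, ∑ j, (Dσ t x k i j) ^ 2))) < ⊤

/-- The divergence `Σ_i ∂_i σ_{ik}` of the `k`-th column of `σ`, from the weak Jacobian. -/
def dvg (Dσ : ℝ → Rn n → Fin m → Fin n → Fin n → ℝ) (t : ℝ) (x : Rn n) (k : Fin m) : ℝ :=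
  ∑ i, Dσ t x k i i

/-- `G = σ^*∇p` in the distributional sense:
`G_k = Σ_j σ_{jk} ∂_j p = Σ_j ∂_j(σ_{jk} p) − p Σ_j ∂_j σ_{jk}` for a.e. `t ∈ (0,T)`. -/
def IsSigmaGrad (T : ℝ) (σ : ℝ → Rn n → Fin m → Rn n)
    (Dσ : ℝ → Rn n → Fin m → Fin n → Fin n → ℝ)
    (p : ℝ → Rn n → ℝ) (G : ℝ → Rn n → Fin m → ℝ) : Prop :=
  ∀ᵐ t ∂volume.restrict (Ioc (0:ℝ) T), ∀ (k : Fin m) (ψ : Rn n → ℝ), TestS ψ →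
    ∫ x, G t x k * ψ x
      = - ∫ x, p t x * (⟪σ t x k, gradient ψ x⟫ + dvg Dσ t x k * ψ x)

/-- `p ∈ L^∞([0,T], L^e ∩ L^∞)` and `G = σ^*∇p ∈ L²([0,T], L²)`. -/
def MemX (T : ℝ) (e : ℝ≥0∞) (p : ℝ → Rn n → ℝ) (G : ℝ → Rn n → Fin m → ℝ) : Prop :=
  Measurable (uncurry p) ∧ Measurable (uncurry G) ∧
  (∃ C : ℝ≥0∞, C < ⊤ ∧ ∀ᵐ t ∂volume.restrict (Ioc (0:ℝ) T),
      eLpNorm (p t) e volume ≤ C ∧ eLpNorm (p t) ⊤ volume ≤ C) ∧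
  (∫⁻ t in Ioc (0:ℝ) T, ∫⁻ x, ENNReal.ofReal (∑ k, (G t x k) ^ 2)) < ⊤

/-- Weak solution of `∂_t p + ∂_i(p b_i) − ½ ∂_i(σ_{ik} σ_{jk} ∂_j p) = 0` with initial
condition `p₀`, where `G = σ^*∇p`. -/
def IsWeakSol (T : ℝ) (b : ℝ → Rn n → Rn n) (σ : ℝ → Rn n → Fin m → Rn n)
    (p : ℝ → Rn n → ℝ) (G : ℝ → Rn n → Fin m → ℝ) (p0 : Rn n → ℝ) : Prop :=
  ∀ φ : ℝ → Rn n → ℝ, TestT T φ →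
    (∫ t in Ioc (0:ℝ) T, ∫ x, p t x * pt φ t x) + ∫ x, p0 x * φ 0 x
      = - (∫ t in Ioc (0:ℝ) T, ∫ x, p t x * ⟪b t x, gradient (φ t) x⟫)
        + (1/2) * ∫ t in Ioc (0:ℝ) T, ∫ x, ∑ k, G t x k * ⟪σ t x k, gradient (φ t) x⟫

/-- All the hypotheses of the main theorem on the coefficients `b` and `σ`. -/
def MainHyp (T : ℝ) (b : ℝ → Rn n → Rn n) (ν : ℝ → Measure (Rn n))
    (M : ℝ → Rn n → Fin n → Fin n → ℝ) (divb : ℝ → Rn n → ℝ)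
    (σ : ℝ → Rn n → Fin m → Rn n) (Dσ : ℝ → Rn n → Fin m → Fin n → Fin n → ℝ) : Prop :=
  BVt T b ν M ∧ BGrowth T b ∧ DivB T b divb ∧ DivBNeg T divb ∧ SigmaW T σ Dσ ∧ SGrowth T σ

/-- The anisotropic functional `Λ(A, ρ) = ∫ |⟨Az, ∇ρ(z)⟩| dz`. -/
def Lam (A : Fin n → Fin n → ℝ) (ρ : Rn n → ℝ) : ℝ :=
  ∫ z : Rn n, |∑ i, (∑ j, A i j * z j) * gradient ρ z i|

/-- The functional `I(ρ) = ∫ |z| |∇ρ(z)| dz`. -/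
def Irho (ρ : Rn n → ℝ) : ℝ := ∫ z : Rn n, ‖z‖ * ‖gradient ρ z‖

/-- The error term `S_ε = [ρ_ε, ∂_i σ_{ik}](σ_{jk} ∂_j p)`,
where `dσ x k = Σ_i ∂_i σ_{ik}(x)` and `G = σ^*∇p`. -/
def Sterm (ρε : Rn n → ℝ) (dσ : Rn n → Fin m → ℝ) (G : Rn n → Fin m → ℝ) (x : Rn n) : ℝ :=
  ∑ k, commMul ρε (fun y => dσ y k) (fun y => G y k) x

/-- The error term `T_ε = [ρ_ε, σ_{ik} ∂_i](σ_{jk} ∂_j p)`. -/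
def Tterm (ρε : Rn n → ℝ) (σ : Rn n → Fin m → Rn n) (dσ : Rn n → Fin m → ℝ)
    (G : Rn n → Fin m → ℝ) (x : Rn n) : ℝ :=
  ∑ k, commDer ρε (fun y => σ y k) (fun y => dσ y k) (fun y => G y k) x

/-- The error term `R_{k,ε} = [ρ_ε, σ_{jk} ∂_j](p)`. -/
def Rterm (ρε : Rn n → ℝ) (σ : Rn n → Fin m → Rn n) (dσ : Rn n → Fin m → ℝ)
    (p : Rn n → ℝ) (k : Fin m) (x : Rn n) : ℝ :=
  commDer ρε (fun y => σ y k) (fun y => dσ y k) p x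

/-- The combined error term `U_ε = −Q_{1,ε} + ½ (S_ε + T_ε)`. -/
def Uterm (ρε : Rn n → ℝ) (divb : Rn n → ℝ) (σ : Rn n → Fin m → Rn n)
    (dσ : Rn n → Fin m → ℝ) (p : Rn n → ℝ) (G : Rn n → Fin m → ℝ) (x : Rn n) : ℝ :=
  - commMul ρε divb p x + (1/2) * (Sterm ρε dσ G x + Tterm ρε σ dσ G x)

/-- The classical `k`-th component `(σ^*∇p_ε)_k = Σ_j σ_{jk} ∂_j(ρ_ε ∗ p)` of the
regularized solution. -/
def sgradE (ρε : Rn n → ℝ) (σ : Rn n → Fin m → Rn n) (p : Rn n → ℝ) (k : Fin m)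
    (x : Rn n) : ℝ :=
  ∑ j, σ x k j * conv p (pd j ρε) x

end FP

/-! ### Strong-times-bounded convergence in `L¹` -/

lemma enorm_rpow_two (x : ℝ) : ‖x‖ₑ ^ (2 : ℝ) = ENNReal.ofReal (x ^ 2) := by
  rw [Real.enorm_eq_ofReal_abs, ENNReal.ofReal_rpow_of_nonneg (abs_nonneg _) (by norm_num)]
  norm_num

/-- If `gₙ → G` in `L²`, `a ∈ L²`, and `bₙ → b₀` almost everywhere with a uniform bound, then
`bₙ ⟨a, gₙ⟩ → b₀ ⟨a, G⟩` in `L¹`; in particular the integrals converge. The integrability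
conjuncts allow Fubini's theorem to be applied to both sides. -/
lemma tendsto_integral_bilinear {Ω : Type*} [MeasurableSpace Ω] (μ : Measure Ω) {m : ℕ}
    (a G : Fin m → Ω → ℝ) (g : ℕ → Fin m → Ω → ℝ) (b : ℕ → Ω → ℝ) (b₀ : Ω → ℝ) (M : ℝ)
    (ham : ∀ k, Measurable (a k)) (hGm : ∀ k, Measurable (G k))
    (hgm : ∀ n k, Measurable (g n k)) (hbm : ∀ n, Measurable (b n)) (hb₀m : Measurable b₀)
    (ha : ∀ k, ∫⁻ ω, ‖a k ω‖ₑ ^ (2 : ℝ) ∂μ < ⊤) (hG : ∀ k, ∫⁻ ω, ‖G k ω‖ₑ ^ (2 : ℝ) ∂μ < ⊤)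
    (hb : ∀ᶠ n in atTop, ∀ᵐ ω ∂μ, |b n ω| ≤ M) (hb₀ : ∀ᵐ ω ∂μ, |b₀ ω| ≤ M)
    (hbt : ∀ᵐ ω ∂μ, Tendsto (fun n => b n ω) atTop (𝓝 (b₀ ω)))
    (hgt : ∀ k, Tendsto (fun n => ∫⁻ ω, ‖g n k ω - G k ω‖ₑ ^ (2 : ℝ) ∂μ) atTop (𝓝 0)) :
    Integrable (fun ω => b₀ ω * ∑ k, a k ω * G k ω) μ ∧
    (∀ᶠ n in atTop, Integrable (fun ω => b n ω * ∑ k, a k ω * g n k ω) μ) ∧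
    Tendsto (fun n => ∫ ω, b n ω * ∑ k, a k ω * g n k ω ∂μ) atTop
      (𝓝 (∫ ω, b₀ ω * ∑ k, a k ω * G k ω ∂μ)) := by
  have CS : ∀ (u v : Ω → ℝ), Measurable u → Measurable v →
      ∫⁻ ω, ‖u ω * v ω‖ₑ ∂μ ≤
        (∫⁻ ω, ‖u ω‖ₑ ^ (2 : ℝ) ∂μ) ^ (1 / 2 : ℝ) * (∫⁻ ω, ‖v ω‖ₑ ^ (2 : ℝ) ∂μ) ^ (1 / 2 : ℝ) := by
    intro u v hu hv
    simp_rw [enorm_mul]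
    exact ENNReal.lintegral_mul_le_Lp_mul_Lq μ Real.HolderConjugate.two_two
      hu.enorm.aemeasurable hv.enorm.aemeasurable
  have hAi : Integrable (fun ω => ∑ k, a k ω * G k ω) μ := by
    refine integrable_finsetSum _ fun k _ => ⟨((ham k).mul (hGm k)).aestronglyMeasurable, ?_⟩
    refine (CS _ _ (ham k) (hGm k)).trans_lt (ENNReal.mul_lt_top ?_ ?_)
    · exact ENNReal.rpow_lt_top_of_nonneg (by norm_num) (ha k).ne
    · exact ENNReal.rpow_lt_top_of_nonneg (by norm_num) (hG k).ne
  have hAm : Measurable (fun ω => ∑ k, a k ω * G k ω) := by fun_prop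
  have hFi : Integrable (fun ω => b₀ ω * ∑ k, a k ω * G k ω) μ :=
    hAi.bdd_mul (c := M) hb₀m.aestronglyMeasurable (by simpa using hb₀)
  have hDCT : Tendsto (fun n => ∫⁻ ω, ‖(b n ω - b₀ ω) * ∑ k, a k ω * G k ω‖ₑ ∂μ) atTop (𝓝 0) := by
    have := tendsto_lintegral_filter_of_dominated_convergence (μ := μ) (l := atTop)
      (F := fun n ω => ‖(b n ω - b₀ ω) * ∑ k, a k ω * G k ω‖ₑ) (f := fun _ => 0)
      (fun ω => ENNReal.ofReal (2 * M) * ‖∑ k, a k ω * G k ω‖ₑ)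
      (Eventually.of_forall fun n => (((hbm n).sub hb₀m).mul hAm).enorm) ?_ ?_ ?_
    · simpa using this
    · filter_upwards [hb] with n hn
      filter_upwards [hn, hb₀] with ω h1 h2
      rw [enorm_mul]
      gcongr
      rw [Real.enorm_eq_ofReal_abs]
      apply ENNReal.ofReal_le_ofReal
      exact (abs_sub _ _).trans (by linarith)
    · rw [lintegral_const_mul _ hAm.enorm]
      exact (ENNReal.mul_lt_top ENNReal.ofReal_lt_top hAi.2).ne
    · filter_upwards [hbt] with ω h
      have h1 : Tendsto (fun n => (b n ω - b₀ ω) * ∑ k, a k ω * G k ω) atTop (𝓝 0) := by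
        simpa using (h.sub_const (b₀ ω)).mul_const (∑ k, a k ω * G k ω)
      simpa using h1.enorm
  have hCS : Tendsto (fun n => ENNReal.ofReal M * ∑ k, (∫⁻ ω, ‖a k ω‖ₑ ^ (2 : ℝ) ∂μ) ^ (1 / 2 : ℝ)
      * (∫⁻ ω, ‖g n k ω - G k ω‖ₑ ^ (2 : ℝ) ∂μ) ^ (1 / 2 : ℝ)) atTop (𝓝 0) := by
    have h0 : ∀ k, Tendsto (fun n => (∫⁻ ω, ‖a k ω‖ₑ ^ (2 : ℝ) ∂μ) ^ (1 / 2 : ℝ)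
        * (∫⁻ ω, ‖g n k ω - G k ω‖ₑ ^ (2 : ℝ) ∂μ) ^ (1 / 2 : ℝ)) atTop (𝓝 0) := by
      intro k
      have h1 := ((ENNReal.continuous_rpow_const (y := (1 / 2 : ℝ))).tendsto 0).comp (hgt k)
      have h2 := ENNReal.Tendsto.const_mul (a := (∫⁻ ω, ‖a k ω‖ₑ ^ (2 : ℝ) ∂μ) ^ (1 / 2 : ℝ)) h1
        (Or.inr (ENNReal.rpow_lt_top_of_nonneg (by norm_num) (ha k).ne).ne)
      simpa using h2
    have h3 := ENNReal.Tendsto.const_mul (a := ENNReal.ofReal M)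
      (tendsto_finsetSum Finset.univ fun k _ => h0 k) (Or.inr ENNReal.ofReal_ne_top)
    simpa using h3
  have hBm : ∀ n, Measurable fun ω => ‖(b n ω - b₀ ω) * ∑ k, a k ω * G k ω‖ₑ := fun n =>
    (((hbm n).sub hb₀m).mul hAm).enorm
  have hL1 : Tendsto (fun n => ∫⁻ ω, ‖b n ω * ∑ k, a k ω * g n k ω
      - b₀ ω * ∑ k, a k ω * G k ω‖ₑ ∂μ) atTop (𝓝 0) := by
    have hsum := hCS.add hDCT
    rw [add_zero] at hsum
    refine tendsto_of_tendsto_of_tendsto_of_le_of_le' tendsto_const_nhds hsum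
      (Eventually.of_forall fun _ => zero_le) ?_
    filter_upwards [hb] with n hn
    have hm1 : ∀ k, Measurable fun ω => ‖a k ω * (g n k ω - G k ω)‖ₑ := fun k =>
      ((ham k).mul ((hgm n k).sub (hGm k))).enorm
    calc ∫⁻ ω, ‖b n ω * ∑ k, a k ω * g n k ω - b₀ ω * ∑ k, a k ω * G k ω‖ₑ ∂μ
        ≤ ∫⁻ ω, (ENNReal.ofReal M * ∑ k, ‖a k ω * (g n k ω - G k ω)‖ₑ
            + ‖(b n ω - b₀ ω) * ∑ k, a k ω * G k ω‖ₑ) ∂μ := by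
          apply lintegral_mono_ae
          filter_upwards [hn] with ω h1
          have : b n ω * ∑ k, a k ω * g n k ω - b₀ ω * ∑ k, a k ω * G k ω
              = b n ω * ∑ k, a k ω * (g n k ω - G k ω) + (b n ω - b₀ ω) * ∑ k, a k ω * G k ω := by
            simp only [mul_sub, Finset.sum_sub_distrib]
            ring
          rw [this]
          refine (enorm_add_le _ _).trans ?_
          gcongr
          rw [enorm_mul]
          gcongr
          · rw [Real.enorm_eq_ofReal_abs]
            exact ENNReal.ofReal_le_ofReal h1
          · exact enorm_sum_le _ _
      _ = ENNReal.ofReal M * ∑ k, ∫⁻ ω, ‖a k ω * (g n k ω - G k ω)‖ₑ ∂μ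
            + ∫⁻ ω, ‖(b n ω - b₀ ω) * ∑ k, a k ω * G k ω‖ₑ ∂μ := by
          rw [lintegral_add_right _ (hBm n),
            lintegral_const_mul _ (Finset.measurable_sum _ fun k _ => hm1 k),
            lintegral_finsetSum _ fun k _ => hm1 k]
      _ ≤ _ := by
          gcongr with k
          exact CS _ _ (ham k) ((hgm n k).sub (hGm k))
  have hFn : ∀ᶠ n in atTop, Integrable (fun ω => b n ω * ∑ k, a k ω * g n k ω) μ := by
    filter_upwards [hL1.eventually_lt_const ENNReal.zero_lt_top] with n hn
    have hm : Measurable fun ω => b n ω * ∑ k, a k ω * g n k ω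
        - b₀ ω * ∑ k, a k ω * G k ω := by fun_prop
    have hd : Integrable (fun ω => b n ω * ∑ k, a k ω * g n k ω
        - b₀ ω * ∑ k, a k ω * G k ω) μ := ⟨hm.aestronglyMeasurable, hn⟩
    exact (hd.add hFi).congr (Eventually.of_forall fun ω => sub_add_cancel _ _)
  exact ⟨hFi, hFn, tendsto_integral_of_L1 _ hFi.1 hFn hL1⟩

namespace FP

variable {n m : ℕ}

/-! ### Mollification -/

lemma moll_nonneg {ρ : Rn n → ℝ} (hρ : IsKernel ρ) {ε : ℝ} (hε : 0 < ε) (x : Rn n) :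
    0 ≤ moll ρ ε x :=
  mul_nonneg (by positivity) (hρ.nonneg _)

lemma moll_continuous {ρ : Rn n → ℝ} (hρ : IsKernel ρ) (ε : ℝ) : Continuous (moll ρ ε) := by
  have := hρ.smooth.continuous
  unfold moll
  fun_prop

lemma moll_contDiff {ρ : Rn n → ℝ} (hρ : IsKernel ρ) (ε : ℝ) :
    ContDiff ℝ (⊤ : ℕ∞) (moll ρ ε) :=
  contDiff_const.mul (hρ.smooth.comp (contDiff_const_smul _))

lemma pd_moll_continuous {ρ : Rn n → ℝ} (hρ : IsKernel ρ) (ε : ℝ) (j : Fin n) :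
    Continuous (pd j (moll ρ ε)) :=
  ((moll_contDiff hρ ε).continuous_fderiv (by simp)).clm_apply continuous_const

lemma kernel_hasCompactSupport {ρ : Rn n → ℝ} (hρ : IsKernel ρ) : HasCompactSupport ρ :=
  (isCompact_closedBall (0 : Rn n) 1).of_isClosed_subset (isClosed_tsupport _)
    (hρ.supp.trans ball_subset_closedBall)

lemma kernel_bdd {ρ : Rn n → ℝ} (hρ : IsKernel ρ) : ∃ K, 0 ≤ K ∧ ∀ x, ρ x ≤ K := by
  obtain ⟨K, hK⟩ := (kernel_hasCompactSupport hρ).exists_bound_of_continuous hρ.smooth.continuous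
  exact ⟨K, (norm_nonneg _).trans (hK 0), fun x => (le_abs_self _).trans (hK x)⟩

lemma moll_eq_zero {ρ : Rn n → ℝ} (hρ : IsKernel ρ) {ε : ℝ} (hε : 0 < ε) {x : Rn n}
    (hx : ε ≤ ‖x‖) : moll ρ ε x = 0 := by
  have : ρ (ε⁻¹ • x) = 0 := by
    by_contra h
    have h1 := hρ.supp (subset_tsupport _ (mem_support.2 h))
    rw [mem_ball_zero_iff, norm_smul, norm_inv, Real.norm_of_nonneg hε.le,
      inv_mul_lt_iff₀ hε] at h1
    linarith
  simp [moll, this]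

lemma integrable_moll_sub {ρ : Rn n → ℝ} (hρ : IsKernel ρ) {ε : ℝ} (hε : 0 < ε) (x : Rn n) :
    Integrable fun y => moll ρ ε (x - y) := by
  have h1 : Integrable ρ :=
    hρ.smooth.continuous.integrable_of_hasCompactSupport (kernel_hasCompactSupport hρ)
  have h2 : Integrable (moll ρ ε) := (h1.comp_smul (inv_ne_zero hε.ne')).const_mul _
  exact h2.comp_sub_left x

lemma integral_moll_sub {ρ : Rn n → ℝ} (hρ : IsKernel ρ) {ε : ℝ} (hε : 0 < ε) (x : Rn n) :
    ∫ y, moll ρ ε (x - y) = 1 := by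
  rw [integral_sub_left_eq_self (moll ρ ε) volume x]
  unfold moll
  rw [integral_const_mul, Measure.integral_comp_inv_smul, hρ.total]
  have : ε ^ n ≠ 0 := by positivity
  simp [abs_of_pos hε, this]

lemma integrable_mul_moll {ρ : Rn n → ℝ} (hρ : IsKernel ρ) {ε : ℝ} (hε : 0 < ε)
    {f : Rn n → ℝ} (hf : Measurable f) {C : ℝ} (hC : ∀ᵐ y, |f y| ≤ C) (x : Rn n) :
    Integrable fun y => f y * moll ρ ε (x - y) :=
  (integrable_moll_sub hρ hε x).bdd_mul (c := C) hf.aestronglyMeasurable (by simpa using hC)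

lemma abs_conv_moll_le {ρ : Rn n → ℝ} (hρ : IsKernel ρ) {ε : ℝ} (hε : 0 < ε)
    {f : Rn n → ℝ} {C : ℝ} (hC : ∀ᵐ y, |f y| ≤ C) (x : Rn n) :
    |conv f (moll ρ ε) x| ≤ C := by
  have h := norm_integral_le_of_norm_le (f := fun y => f y * moll ρ ε (x - y))
    ((integrable_moll_sub hρ hε x).const_mul C) (by
      filter_upwards [hC] with y hy
      rw [norm_mul, Real.norm_of_nonneg (moll_nonneg hρ hε _)]
      exact mul_le_mul_of_nonneg_right hy (moll_nonneg hρ hε _))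
  rwa [integral_const_mul, integral_moll_sub hρ hε, mul_one] at h

/-- Mollifications of a bounded function converge at every Lebesgue point, hence almost
everywhere: `|ρ_ε ∗ f - f|(x)` is at most `sup ρ · |B(0,1)|` times the mean of `|f - f(x)|` over
the ball of radius `ε` centred at `x`. -/
lemma ae_tendsto_conv_moll {ρ : Rn n → ℝ} (hρ : IsKernel ρ)
    {f : Rn n → ℝ} (hf : Measurable f) {C : ℝ} (hC : ∀ᵐ y, |f y| ≤ C) :
    ∀ᵐ x, Tendsto (fun ε => conv f (moll ρ ε) x) (𝓝[>] (0 : ℝ)) (𝓝 (f x)) := by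
  have hfl : LocallyIntegrable f (volume : Measure (Rn n)) :=
    (memLp_top_of_bound hf.aestronglyMeasurable C hC).locallyIntegrable le_top
  obtain ⟨K, hK0, hK⟩ := kernel_bdd hρ
  filter_upwards [(Besicovitch.vitaliFamily (volume : Measure (Rn n))).ae_tendsto_average_norm_sub
    hfl] with x hx
  have hx' := hx.comp (Besicovitch.tendsto_filterAt (volume : Measure (Rn n)) x)
  have hx2 := hx'.const_mul (K * volume.real (ball (0 : Rn n) 1))
  rw [mul_zero] at hx2
  rw [tendsto_iff_norm_sub_tendsto_zero]
  refine tendsto_of_tendsto_of_tendsto_of_le_of_le' tendsto_const_nhds hx2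
    (Eventually.of_forall fun _ => norm_nonneg _) ?_
  filter_upwards [self_mem_nhdsWithin] with ε hε
  rw [mem_Ioi] at hε
  have hfi := integrable_mul_moll hρ hε hf hC x
  have e1 : conv f (moll ρ ε) x - f x = ∫ y, (f y - f x) * moll ρ ε (x - y) := by
    have : f x = ∫ y, f x * moll ρ ε (x - y) := by
      rw [integral_const_mul, integral_moll_sub hρ hε, mul_one]
    conv_lhs => rw [this]
    rw [conv, ← integral_sub hfi ((integrable_moll_sub hρ hε x).const_mul _)]
    simp only [sub_mul]
  have e2 : ∫ y, (f y - f x) * moll ρ ε (x - y)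
      = ∫ y in closedBall x ε, (f y - f x) * moll ρ ε (x - y) := by
    refine (setIntegral_eq_integral_of_forall_compl_eq_zero fun y hy => ?_).symm
    rw [moll_eq_zero hρ hε, mul_zero]
    rw [mem_closedBall, not_le, dist_comm, dist_eq_norm] at hy
    exact hy.le
  have hint : IntegrableOn (fun y => ‖f y - f x‖) (closedBall x ε) :=
    ((hfl.integrableOn_isCompact (isCompact_closedBall x ε)).sub
      (integrableOn_const (by exact measure_closedBall_lt_top.ne))).norm
  have e3 : ‖∫ y in closedBall x ε, (f y - f x) * moll ρ ε (x - y)‖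
      ≤ ∫ y in closedBall x ε, ((ε ^ n)⁻¹ * K) * ‖f y - f x‖ := by
    refine norm_integral_le_of_norm_le (hint.const_mul _) (Eventually.of_forall fun y => ?_)
    rw [norm_mul, mul_comm, Real.norm_of_nonneg (moll_nonneg hρ hε _)]
    gcongr
    unfold moll
    gcongr
    exact hK _
  rw [e1, e2]
  refine e3.trans (le_of_eq ?_)
  have hv : volume.real (closedBall x ε) = ε ^ n * volume.real (ball (0 : Rn n) 1) := by
    rw [Measure.addHaar_real_closedBall _ _ hε.le]
    simp
  have hpos : 0 < volume.real (ball (0 : Rn n) 1) :=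
    ENNReal.toReal_pos (measure_ball_pos _ _ one_pos).ne' measure_ball_lt_top.ne
  have hεn : 0 < ε ^ n := by positivity
  simp only [comp_apply]
  rw [integral_const_mul, setAverage_eq, hv, smul_eq_mul]
  field_simp

/-- Joint measurability in `(t, x)` of the spatial convolution with a continuous kernel. -/
lemma measurable_conv {p : ℝ → Rn n → ℝ} (hp : Measurable (uncurry p)) {κ : Rn n → ℝ}
    (hκ : Continuous κ) : Measurable fun z : ℝ × Rn n => conv (p z.1) κ z.2 := by
  have h : StronglyMeasurable
      (uncurry fun (z : ℝ × Rn n) (y : Rn n) => p z.1 y * κ (z.2 - y)) := by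
    apply Measurable.stronglyMeasurable
    have h1 : Measurable fun w : (ℝ × Rn n) × Rn n => p w.1.1 w.2 :=
      hp.comp (by fun_prop : Measurable fun w : (ℝ × Rn n) × Rn n => (w.1.1, w.2))
    have h2 : Measurable fun w : (ℝ × Rn n) × Rn n => κ (w.1.2 - w.2) :=
      (hκ.comp (by fun_prop)).measurable
    exact h1.mul h2
  exact (h.integral_prod_right (ν := volume)).measurable

/-! ### Gradients of test functions -/

/-- The spatial gradient of a space-time test function is continuous, bounded and supported in
`ℝ × B(0,R)` for some `R`. -/
lemma gradient_test {φ : ℝ → Rn n → ℝ} (h1 : ContDiff ℝ (⊤ : ℕ∞) (uncurry φ))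
    (h2 : HasCompactSupport (uncurry φ)) :
    (Continuous fun z : ℝ × Rn n => gradient (φ z.1) z.2) ∧
    ∃ L R : ℝ, 0 < R ∧ (∀ t x, ‖gradient (φ t) x‖ ≤ L) ∧
      ∀ t x, x ∉ ball (0 : Rn n) R → gradient (φ t) x = 0 := by
  have hc : Continuous fun z : ℝ × Rn n => gradient (φ z.1) z.2 := by
    have h3 : ContDiff ℝ 0 fun z : ℝ × Rn n => fderiv ℝ (φ z.1) z.2 := by
      refine ContDiff.fderiv (f := fun (z : ℝ × Rn n) => φ z.1) (g := fun z => z.2)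
        (m := (⊤ : ℕ∞)) ?_ (by fun_prop) (by simp)
      exact h1.comp (by fun_prop : ContDiff ℝ (⊤ : ℕ∞)
        fun w : (ℝ × Rn n) × Rn n => (w.1.1, w.2))
    exact (InnerProductSpace.toDual ℝ (Rn n)).symm.continuous.comp h3.continuous
  have h0 : ∀ z : ℝ × Rn n, z ∉ tsupport (uncurry φ) → gradient (φ z.1) z.2 = 0 := by
    intro z hz
    have e1 : uncurry φ =ᶠ[𝓝 z] 0 := notMem_tsupport_iff_eventuallyEq.1 hz
    have e2 : φ z.1 =ᶠ[𝓝 z.2] fun _ => 0 := by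
      have hcont : Tendsto (fun x : Rn n => (z.1, x)) (𝓝 z.2) (𝓝 z) :=
        (by fun_prop : Continuous fun x : Rn n => (z.1, x)).tendsto z.2
      exact hcont.eventually e1
    rw [gradient, e2.fderiv_eq]
    simp
  have hcs : HasCompactSupport fun z : ℝ × Rn n => gradient (φ z.1) z.2 :=
    HasCompactSupport.intro h2 h0
  obtain ⟨L, hL⟩ := hcs.exists_bound_of_continuous hc
  obtain ⟨R, hR, hsub⟩ := h2.isBounded.subset_ball_lt 0 (0 : ℝ × Rn n)
  refine ⟨hc, L, R, hR, fun t x => hL (t, x), fun t x hx => h0 (t, x) fun hm => hx ?_⟩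
  have := hsub hm
  rw [mem_ball_zero_iff, Prod.norm_def] at this
  rw [mem_ball_zero_iff]
  exact (le_max_right _ _).trans_lt this

end FP

/-! ### Convergence of the diffusion term -/

/-- **Distributional convergence of the diffusion term under renormalization.** Under the
assumptions of the main theorem on `σ`, if `p ∈ X₂`, `σ^*∇p_ε → σ^*∇p` in
`L²([0,T], L²_loc)` and `β ∈ C²(ℝ)`, then for every test function `φ`,
`∫∫ β'(p_ε)⟨σ^*∇φ, σ^*∇p_ε⟩ → ∫∫ β'(p)⟨σ^*∇φ, σ^*∇p⟩` as `ε → 0`; i.e.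
`∂_i(σ_{ik}σ_{jk}∂_j β(p_ε)) → ∂_i(σ_{ik}σ_{jk}∂_j β(p))` distributionally. -/
theorem diffusion_term_converges (n m : ℕ) (hn : 1 ≤ n) (hm : 1 ≤ m) (T : ℝ) (hT : 0 < T)
    (ρ : Rn n → ℝ) (hρ : FP.IsKernel ρ)
    (σ : ℝ → Rn n → Fin m → Rn n) (Dσ : ℝ → Rn n → Fin m → Fin n → Fin n → ℝ)
    (hσ : FP.SigmaW T σ Dσ) (hσg : FP.SGrowth T σ)
    (p : ℝ → Rn n → ℝ) (G : ℝ → Rn n → Fin m → ℝ)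
    (hX : FP.MemX T 2 p G) (hG : FP.IsSigmaGrad T σ Dσ p G)
    (hconv : ∀ R : ℝ, 0 < R →
      Tendsto (fun ε => ∫⁻ t in Ioc (0:ℝ) T, ∫⁻ x in ball (0 : Rn n) R,
          ENNReal.ofReal
            (∑ k, (FP.sgradE (FP.moll ρ ε) (σ t) (p t) k x - G t x k) ^ 2))
        (𝓝[>] (0:ℝ)) (𝓝 0))
    (β : ℝ → ℝ) (hβ : ContDiff ℝ 2 β) :
    ∀ φ : ℝ → Rn n → ℝ, FP.TestT T φ →
      Tendsto (fun ε => ∫ t in Ioc (0:ℝ) T, ∫ x,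
          deriv β (FP.conv (p t) (FP.moll ρ ε) x)
            * ∑ k, ⟪σ t x k, gradient (φ t) x⟫
                * FP.sgradE (FP.moll ρ ε) (σ t) (p t) k x)
        (𝓝[>] (0:ℝ))
        (𝓝 (∫ t in Ioc (0:ℝ) T, ∫ x,
          deriv β (p t x) * ∑ k, ⟪σ t x k, gradient (φ t) x⟫ * G t x k)) := by
  intro φ hφ
  obtain ⟨hpm, hGm, ⟨C, hCtop, hC⟩, hG2⟩ := hX
  obtain ⟨hσm, -, -, hσ2⟩ := hσ
  obtain ⟨hgc, L, R, hR, hL, hsupp⟩ := FP.gradient_test hφ.1 hφ.2.1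
  have hβ' : Continuous (deriv β) := hβ.continuous_deriv (by norm_num)
  have hpC : ∀ᵐ t ∂volume.restrict (Ioc (0:ℝ) T), ∀ᵐ x, |p t x| ≤ C.toReal := by
    filter_upwards [hC] with t ht
    have h2 := ht.2
    rw [eLpNorm_exponent_top] at h2
    filter_upwards [ae_le_eLpNormEssSup (f := p t) (μ := volume)] with x hx
    have := ENNReal.toReal_mono hCtop.ne (hx.trans h2)
    simpa using this
  obtain ⟨M, hM⟩ := (isCompact_Icc (a := -C.toReal) (b := C.toReal)).exists_bound_of_continuousOn
    hβ'.continuousOn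
  have hMabs : ∀ y, |y| ≤ C.toReal → |deriv β y| ≤ M := fun y hy => hM y (abs_le.1 hy)
  set μ : Measure (ℝ × Rn n) :=
    (volume.restrict (Ioc (0:ℝ) T)).prod (volume.restrict (ball (0 : Rn n) R)) with hμ
  -- The integrands vanish off `B(0,R)`, so the iterated integrals are integrals against `μ`.
  have key : ∀ (q : ℝ × Rn n → ℝ) (v : Fin m → ℝ × Rn n → ℝ),
      Integrable (fun z => q z * ∑ k, ⟪σ z.1 z.2 k, gradient (φ z.1) z.2⟫ * v k z) μ →
      ∫ t in Ioc (0:ℝ) T, ∫ x, q (t, x) * ∑ k, ⟪σ t x k, gradient (φ t) x⟫ * v k (t, x)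
        = ∫ z, q z * ∑ k, ⟪σ z.1 z.2 k, gradient (φ z.1) z.2⟫ * v k z ∂μ := by
    intro q v hi
    rw [hμ, integral_prod _ hi]
    refine integral_congr_ae (Eventually.of_forall fun t => ?_)
    refine (setIntegral_eq_integral_of_forall_compl_eq_zero fun x hx => ?_).symm
    simp [hsupp t x hx]
  have hσk : ∀ k, Measurable fun z : ℝ × Rn n => σ z.1 z.2 k := fun k =>
    (measurable_pi_apply k).comp hσm
  have hGk : ∀ k, Measurable fun z : ℝ × Rn n => G z.1 z.2 k := fun k =>
    (measurable_pi_apply k).comp hGm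
  have ham : ∀ k, Measurable fun z : ℝ × Rn n => ⟪σ z.1 z.2 k, gradient (φ z.1) z.2⟫ := fun k =>
    (hσk k).inner hgc.measurable
  have hsm : ∀ ε k, Measurable fun z : ℝ × Rn n =>
      FP.sgradE (FP.moll ρ ε) (σ z.1) (p z.1) k z.2 := by
    intro ε k
    unfold FP.sgradE
    refine Finset.measurable_sum _ fun j _ => Measurable.mul ?_
      (FP.measurable_conv hpm (FP.pd_moll_continuous hρ ε j))
    exact (by fun_prop : Measurable fun v : Rn n => v j).comp (hσk k)
  have hcm : ∀ ε, Measurable fun z : ℝ × Rn n => FP.conv (p z.1) (FP.moll ρ ε) z.2 := fun ε =>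
    FP.measurable_conv hpm (FP.moll_continuous hρ ε)
  have ha2 : ∀ k, ∫⁻ z, ‖⟪σ z.1 z.2 k, gradient (φ z.1) z.2⟫‖ₑ ^ (2:ℝ) ∂μ < ⊤ := by
    intro k
    rw [hμ, lintegral_prod _ ((ham k).enorm.pow_const _).aemeasurable]
    have hle : ∫⁻ t in Ioc (0:ℝ) T, ∫⁻ x in ball (0 : Rn n) R,
          ‖⟪σ t x k, gradient (φ t) x⟫‖ₑ ^ (2:ℝ)
        ≤ ∫⁻ t in Ioc (0:ℝ) T, ENNReal.ofReal (L ^ 2) * ∫⁻ x in ball (0 : Rn n) R,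
          ENNReal.ofReal (∑ k, (‖σ t x k‖ ^ 2 + ∑ i, ∑ j, (Dσ t x k i j) ^ 2)) := by
      refine lintegral_mono fun t => ?_
      rw [← lintegral_const_mul' _ _ ENNReal.ofReal_ne_top]
      refine lintegral_mono fun x => ?_
      simp only
      rw [enorm_rpow_two, ← ENNReal.ofReal_mul (by positivity)]
      apply ENNReal.ofReal_le_ofReal
      have h1 : |⟪σ t x k, gradient (φ t) x⟫| ≤ ‖σ t x k‖ * L :=
        (abs_real_inner_le_norm _ _).trans
          (mul_le_mul_of_nonneg_left (hL t x) (norm_nonneg _))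
      have h2 : ‖σ t x k‖ ^ 2 ≤ ∑ k, (‖σ t x k‖ ^ 2 + ∑ i, ∑ j, (Dσ t x k i j) ^ 2) :=
        (le_add_of_nonneg_right (by positivity)).trans
          (Finset.single_le_sum (f := fun k => ‖σ t x k‖ ^ 2 + ∑ i, ∑ j, (Dσ t x k i j) ^ 2)
            (fun k _ => by positivity) (Finset.mem_univ k))
      calc ⟪σ t x k, gradient (φ t) x⟫ ^ 2 = |⟪σ t x k, gradient (φ t) x⟫| ^ 2 := (sq_abs _).symm
        _ ≤ (‖σ t x k‖ * L) ^ 2 := by gcongr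
        _ = L ^ 2 * ‖σ t x k‖ ^ 2 := by ring
        _ ≤ _ := by gcongr
    refine hle.trans_lt ?_
    rw [lintegral_const_mul' _ _ ENNReal.ofReal_ne_top]
    exact ENNReal.mul_lt_top ENNReal.ofReal_lt_top (hσ2 R hR)
  -- A single component of an `ℝᵐ`-valued function is controlled by the whole sum of squares.
  have hcomp : ∀ (w : ℝ × Rn n → Fin m → ℝ) (k : Fin m), Measurable (fun z => w z k) →
      ∫⁻ z, ‖w z k‖ₑ ^ (2:ℝ) ∂μ ≤ ∫⁻ t in Ioc (0:ℝ) T, ∫⁻ x in ball (0 : Rn n) R,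
        ENNReal.ofReal (∑ k, (w (t, x) k) ^ 2) := by
    intro w k hw
    rw [hμ, lintegral_prod _ (hw.enorm.pow_const _).aemeasurable]
    refine lintegral_mono fun t => lintegral_mono fun x => ?_
    simp only
    rw [enorm_rpow_two]
    exact ENNReal.ofReal_le_ofReal (Finset.single_le_sum (f := fun k => (w (t, x) k) ^ 2)
      (fun k _ => sq_nonneg _) (Finset.mem_univ k))
  have hG2' : ∀ k, ∫⁻ z, ‖G z.1 z.2 k‖ₑ ^ (2:ℝ) ∂μ < ⊤ := fun k =>
    ((hcomp (fun z => G z.1 z.2) k (hGk k)).trans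
      (lintegral_mono fun t => setLIntegral_le_lintegral _ _)).trans_lt hG2
  have hprod : ∀ P : ℝ × Rn n → Prop, MeasurableSet {z | P z} →
      (∀ᵐ t ∂volume.restrict (Ioc (0:ℝ) T), ∀ᵐ x, P (t, x)) → ∀ᵐ z ∂μ, P z := by
    intro P hP h
    rw [hμ, Measure.ae_prod_iff_ae_ae hP]
    filter_upwards [h] with t ht using ae_restrict_of_ae ht
  -- Along a sequence the set of convergence points is measurable, so that Fubini applies to it.
  refine tendsto_of_seq_tendsto fun u hu => ?_
  have hupos : ∀ᶠ i in atTop, 0 < u i := hu.eventually self_mem_nhdsWithin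
  have hb : ∀ᶠ i in atTop, ∀ᵐ z ∂μ,
      |deriv β (FP.conv (p z.1) (FP.moll ρ (u i)) z.2)| ≤ M := by
    filter_upwards [hupos] with i hi
    refine hprod _ (measurableSet_le (hβ'.measurable.comp (hcm _)).abs measurable_const) ?_
    filter_upwards [hpC] with t ht
    exact Eventually.of_forall fun x => hMabs _ (FP.abs_conv_moll_le hρ hi ht x)
  have hb₀ : ∀ᵐ z ∂μ, |deriv β (p z.1 z.2)| ≤ M := by
    refine hprod _ (measurableSet_le (hβ'.measurable.comp hpm).abs measurable_const) ?_
    filter_upwards [hpC] with t ht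
    filter_upwards [ht] with x hx using hMabs _ hx
  have hbt : ∀ᵐ z ∂μ, Tendsto (fun i => FP.conv (p z.1) (FP.moll ρ (u i)) z.2 - p z.1 z.2) atTop
      (𝓝 0) := by
    refine hprod _ (measurableSet_tendsto _ fun i => (hcm _).sub hpm) ?_
    filter_upwards [hpC] with t ht
    filter_upwards [FP.ae_tendsto_conv_moll hρ (hpm.comp measurable_prodMk_left) ht] with x hx
    exact tendsto_sub_nhds_zero_iff.2 (hx.comp hu)
  have hbt' : ∀ᵐ z ∂μ, Tendsto (fun i => deriv β (FP.conv (p z.1) (FP.moll ρ (u i)) z.2)) atTop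
      (𝓝 (deriv β (p z.1 z.2))) := by
    filter_upwards [hbt] with z hz
    exact (hβ'.tendsto _).comp (tendsto_sub_nhds_zero_iff.1 hz)
  have hgt : ∀ k, Tendsto (fun i => ∫⁻ z, ‖FP.sgradE (FP.moll ρ (u i)) (σ z.1) (p z.1) k z.2
      - G z.1 z.2 k‖ₑ ^ (2:ℝ) ∂μ) atTop (𝓝 0) := fun k =>
    tendsto_of_tendsto_of_tendsto_of_le_of_le tendsto_const_nhds ((hconv R hR).comp hu)
      (fun _ => zero_le) fun i => hcomp
        (fun z k => FP.sgradE (FP.moll ρ (u i)) (σ z.1) (p z.1) k z.2 - G z.1 z.2 k) k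
        ((hsm _ k).sub (hGk k))
  obtain ⟨hF, hFn, hlim⟩ := tendsto_integral_bilinear μ
    (fun k z => ⟪σ z.1 z.2 k, gradient (φ z.1) z.2⟫) (fun k z => G z.1 z.2 k)
    (fun i k z => FP.sgradE (FP.moll ρ (u i)) (σ z.1) (p z.1) k z.2)
    (fun i z => deriv β (FP.conv (p z.1) (FP.moll ρ (u i)) z.2))
    (fun z => deriv β (p z.1 z.2)) M ham hGk (fun i k => hsm _ k)
    (fun i => hβ'.measurable.comp (hcm _)) (hβ'.measurable.comp hpm) ha2 hG2' hb hb₀ hbt' hgt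
  rw [← key (fun z => deriv β (p z.1 z.2)) (fun k z => G z.1 z.2 k) hF] at hlim
  refine hlim.congr' ?_
  filter_upwards [hFn] with i hi
  exact (key (fun z => deriv β (FP.conv (p z.1) (FP.moll ρ (u i)) z.2))
    (fun k z => FP.sgradE (FP.moll ρ (u i)) (σ z.1) (p z.1) k z.2) hi).symm
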